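/- Let G be a finite simple graph with no isolated vertices and positive edge weights σ, let Γ_ec be the family of edge covers of G and Γ_fec the family of fractional edge covers of G. Then (3/4)·Mod_{∞,σ}(Γ_fec) ≤ Mod_{∞,σ}(Γ_ec) ≤ Mod_{∞,σ}(Γ_fec), where Mod_{∞,σ}(Γ) is the infimum over admissible densities ρ of the ∞-energy max_{e∈E} σ(e)ρ(e). -/

import Mathlib

open Finset

noncomputable section
open scoped Classical

variable {V : Type*}

/-- The set of admissible densities for a family `Γ` of objects on the edge set of `G`.
Densities are elements of `ℝ^E_{≥0}`, modeled as nonnegative functions on `Sym2 V`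
vanishing outside the edge set of `G`. `ρ` is admissible if `ℓ_ρ(γ) ≥ 1` for all `γ ∈ Γ`. -/
def Adm [Fintype V] [DecidableEq V] (G : SimpleGraph V) (Γ : Set (Sym2 V → ℝ)) :
    Set (Sym2 V → ℝ) :=
  {ρ | (∀ e, 0 ≤ ρ e) ∧ (∀ e ∉ G.edgeSet, ρ e = 0) ∧
    ∀ γ ∈ Γ, 1 ≤ ∑ e ∈ G.edgeFinset, γ e * ρ e}

/-- The `p`-energy of a density `ρ` with edge weights `σ`: `Σ_e σ(e) ρ(e)^p`. -/
def energy [Fintype V] [DecidableEq V] (p : ℝ) (σ : Sym2 V → ℝ) (G : SimpleGraph V)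
    (ρ : Sym2 V → ℝ) : ℝ :=
  ∑ e ∈ G.edgeFinset, σ e * ρ e ^ p

/-- The `p`-modulus of a family `Γ` with edge weights `σ`:
the infimum of the `p`-energy over admissible densities. -/
def Modulus [Fintype V] [DecidableEq V] (p : ℝ) (σ : Sym2 V → ℝ) (G : SimpleGraph V)
    (Γ : Set (Sym2 V → ℝ)) : ℝ :=
  sInf (energy p σ G '' Adm G Γ)

/-- The unweighted 2-energy `Σ_e ρ(e)²`. -/
def energy2 [Fintype V] [DecidableEq V] (G : SimpleGraph V) (ρ : Sym2 V → ℝ) : ℝ :=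
  ∑ e ∈ G.edgeFinset, ρ e ^ 2

/-- The unweighted 2-modulus. -/
def Mod2 [Fintype V] [DecidableEq V] (G : SimpleGraph V) (Γ : Set (Sym2 V → ℝ)) : ℝ :=
  sInf (energy2 G '' Adm G Γ)

/-- `C` is an edge cover of `G`: a set of edges of `G` meeting every vertex. -/
def IsEdgeCover [Fintype V] [DecidableEq V] (G : SimpleGraph V) (C : Finset (Sym2 V)) : Prop :=
  ↑C ⊆ G.edgeSet ∧ ∀ v : V, ∃ e ∈ C, v ∈ e

/-- The family `Γ_ec` of indicator vectors of edge covers of `G`. -/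
def Γec [Fintype V] [DecidableEq V] (G : SimpleGraph V) : Set (Sym2 V → ℝ) :=
  {γ | ∃ C : Finset (Sym2 V), IsEdgeCover G C ∧ γ = fun e => if e ∈ C then 1 else 0}

/-- The family `Γ_fec` of fractional edge covers of `G`: nonnegative vectors on the edge
set with `Σ_{e ∈ δ(v)} γ(e) ≥ 1` at every vertex `v`. -/
def Γfec [Fintype V] [DecidableEq V] (G : SimpleGraph V) : Set (Sym2 V → ℝ) :=
  {γ | (∀ e, 0 ≤ γ e) ∧ (∀ e ∉ G.edgeSet, γ e = 0) ∧
    ∀ v : V, 1 ≤ ∑ e ∈ G.incidenceFinset v, γ e}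

/-- The family `Γ_star` of indicator vectors of the stars `δ(v)`, `v ∈ V`. -/
def Γstar [Fintype V] [DecidableEq V] (G : SimpleGraph V) : Set (Sym2 V → ℝ) :=
  {γ | ∃ v : V, γ = fun e => if e ∈ G.incidenceFinset v then 1 else 0}

/-- The subgraph of `G` whose edge set is the support `{e : γ(e) > 0}` of `γ`. -/
def suppGraph (G : SimpleGraph V) (γ : Sym2 V → ℝ) : SimpleGraph V where
  Adj u v := G.Adj u v ∧ 0 < γ s(u, v)
  symm := by
    constructor
    intro u v h
    refine ⟨h.1.symm, ?_⟩
    rw [Sym2.eq_swap]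
    exact h.2
  loopless := ⟨fun v h => G.loopless.irrefl v h.1⟩

/-- The `∞`-energy of a density `ρ` with weights `σ`: `max_{e ∈ E} σ(e) ρ(e)`. -/
def energyInf [Fintype V] [DecidableEq V] (σ : Sym2 V → ℝ) (G : SimpleGraph V)
    (hE : G.edgeFinset.Nonempty) (ρ : Sym2 V → ℝ) : ℝ :=
  G.edgeFinset.sup' hE fun e => σ e * ρ e

/-- The `∞`-modulus of a family `Γ` with weights `σ`. -/
def ModulusInf [Fintype V] [DecidableEq V] (σ : Sym2 V → ℝ) (G : SimpleGraph V)
    (hE : G.edgeFinset.Nonempty) (Γ : Set (Sym2 V → ℝ)) : ℝ :=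
  sInf (energyInf σ G hE '' Adm G Γ)

/-!
Scaling a density by `4 / 3` turns admissibility for edge covers into admissibility for fractional
edge covers as soon as every fractional edge cover `γ` and every density `ρ` admit an edge cover
`C` with `∑_{e ∈ C} ρ e ≤ 4/3 ∑ₑ γ e * ρ e`.

View `γ` as a symmetric matrix with row sums `sᵢ ≥ 1`. Divide the entry `(i, j)` by `max sᵢ sⱼ`,
put the defects of the row sums on the diagonal, and charge a diagonal entry twice the cheapest
edge at its vertex. The coefficient of `γ s(i, j) * ρ s(i, j)` becomes at most
`sᵢ⁻¹ + sⱼ⁻¹ - (max sᵢ sⱼ)⁻¹ = (min sᵢ sⱼ)⁻¹ ≤ 1`, so the cost does not increase. By Birkhoff,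
some permutation `π` inside the support costs no more.

The edges `{v, π v}`, with the cheapest edge at `v` if `π v = v`, meet every vertex of a nontrivial
cycle twice. Colour the nontrivial cycles properly with three colours: deleting the edges of one
colour never removes two consecutive edges, so an edge cover remains. Averaged over the three
colours, such an edge is kept with weight `2 / 3`, and an edge chosen at a fixed point with weight
`1 ≤ 2/3 * 2`. The remaining factor `2` is there because the matrix counts every edge twice.
-/

theorem exists_fin_three_coloring_perm {α : Type*} [Finite α] (π : Equiv.Perm α) :
    ∃ c : α → Fin 3, ∀ a, π a ≠ a → c (π a) ≠ c a := by
  have := Fintype.ofFinite α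
  suffices h : ∀ s : Finset α, ∃ c : α → Fin 3,
      ∀ a ∈ s, π a ∈ s → π a ≠ a → c (π a) ≠ c a by
    simpa using h univ
  intro s
  induction s using Finset.induction_on with
  | empty => exact ⟨0, by simp⟩
  | insert b s _ ih =>
    obtain ⟨c, hc⟩ := ih
    have third_color : ∀ p q : Fin 3, ∃ x, x ≠ p ∧ x ≠ q := by decide
    obtain ⟨x, hx_next, hx_prev⟩ := third_color (c (π b)) (c (π.symm b))
    refine ⟨Function.update c b x, fun a ha hπa hne => ?_⟩
    by_cases hab : a = b
    · subst hab
      simpa [hne] using hx_next.symm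
    · by_cases hπab : π a = b
      · have ha_prev : a = π.symm b := π.eq_symm_apply.2 hπab
        simpa [hπab, hab, ← ha_prev] using hx_prev
      · simpa [hab, hπab] using
          hc a (mem_of_mem_insert_of_ne ha hab) (mem_of_mem_insert_of_ne hπa hπab) hne

theorem exists_perm_sum_le_of_mem_doublyStochastic {n R : Type*} [Fintype n] [DecidableEq n]
    [Field R] [LinearOrder R] [IsStrictOrderedRing R] {A : Matrix n n R}
    (hA : A ∈ doublyStochastic R n) (c : n → n → R) :
    ∃ π : Equiv.Perm n, (∀ i, 0 < A i (π i)) ∧ ∑ i, c i (π i) ≤ ∑ i, ∑ j, A i j * c i j := by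
  obtain ⟨w, hw_nonneg, hw_sum, hwA⟩ := exists_eq_sum_perm_of_mem_doublyStochastic hA
  have hentry (i j : n) : A i j = ∑ π : Equiv.Perm n, if π i = j then w π else 0 := by
    simp [← hwA, Matrix.sum_apply, PEquiv.toMatrix_apply, eq_comm]
  have hcost : ∑ i, ∑ j, A i j * c i j = ∑ π : Equiv.Perm n, w π * ∑ i, c i (π i) := by
    simp_rw [hentry, sum_mul, ite_mul, zero_mul, mul_sum]
    rw [eq_comm, sum_comm]
    refine sum_congr rfl fun i _ => ?_
    rw [eq_comm, sum_comm]
    simp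
  have hw_ne : ∑ π, w π ≠ 0 := by simp [hw_sum]
  obtain ⟨π₀, -, hπ₀⟩ := exists_ne_zero_of_sum_ne_zero hw_ne
  have hle : ∑ π with w π ≠ 0, w π * ∑ i, c i (π i) ≤
      ∑ π with w π ≠ 0, w π * ∑ i, ∑ j, A i j * c i j := by
    rw [← sum_mul, sum_filter_ne_zero, hw_sum, one_mul, hcost,
      sum_filter_of_ne fun π _ => left_ne_zero_of_mul]
  obtain ⟨π, hπ, hπ_cost⟩ := exists_le_of_sum_le ⟨π₀, by simpa using hπ₀⟩ hle
  have hwπ : 0 < w π := (hw_nonneg π).lt_of_ne' (mem_filter.1 hπ).2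
  refine ⟨π, fun i => ?_, le_of_mul_le_mul_left hπ_cost hwπ⟩
  calc 0 < w π := hwπ
    _ = if π i = π i then w π else 0 := (if_pos rfl).symm
    _ ≤ A i (π i) := by
      rw [hentry]
      exact single_le_sum (f := fun τ : Equiv.Perm n => if τ i = π i then w τ else 0)
        (fun τ _ => by split_ifs <;> simp [hw_nonneg]) (mem_univ π)

section RowDefect

variable {n R : Type*} [Fintype n] [Ring R]

/-- The amount by which the `i`-th row sum of `A` falls short of `1`. Put on the diagonal, it
completes a symmetric substochastic matrix to a doubly stochastic one. -/
def rowDefect (A : Matrix n n R) (i : n) : R :=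
  1 - ∑ j, A i j

theorem add_diagonal_rowDefect_mem_doublyStochastic [DecidableEq n] [PartialOrder R]
    [IsOrderedRing R] {A : Matrix n n R} (hA : A.IsSymm) (hA_nonneg : ∀ i j, 0 ≤ A i j)
    (hA_row : ∀ i, ∑ j, A i j ≤ 1) : A + .diagonal (rowDefect A) ∈ doublyStochastic R n := by
  have hrow (i : n) : ∑ j, (A + .diagonal (rowDefect A)) i j = 1 := by
    simp [Matrix.diagonal_apply, sum_add_distrib, rowDefect]
  refine mem_doublyStochastic_iff_sum.2 ⟨fun i j => ?_, hrow, fun j => ?_⟩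
  · refine add_nonneg (hA_nonneg i j) ?_
    rw [Matrix.diagonal_apply]
    split_ifs
    exacts [sub_nonneg.2 (hA_row i), le_rfl]
  · rw [← hrow j]
    have hsymm := hA.add (Matrix.isSymm_diagonal (rowDefect A))
    exact sum_congr rfl fun i _ => hsymm.apply j i

end RowDefect

section ScaleByMaxRowSum

variable {n R : Type*} [Fintype n] [Field R] [LinearOrder R]

/-- The matrix with entries `A i j / max sᵢ sⱼ`, where `sᵢ` is the `i`-th row sum of `A`. Dividing
by the larger of the two row sums keeps a symmetric matrix symmetric while bringing every row sum
down to at most `1`. -/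
def scaleByMaxRowSum (A : Matrix n n R) : Matrix n n R :=
  .of fun i j => A i j / max (∑ k, A i k) (∑ k, A j k)

variable {A : Matrix n n R}

theorem isSymm_scaleByMaxRowSum (hA : A.IsSymm) : (scaleByMaxRowSum A).IsSymm :=
  .ext fun i j => by simp [scaleByMaxRowSum, hA.apply i j, max_comm]

theorem rowDefect_scaleByMaxRowSum {i : n} (hi : ∑ j, A i j ≠ 0) :
    rowDefect (scaleByMaxRowSum A) i =
      ∑ j, A i j * ((∑ k, A i k)⁻¹ - (max (∑ k, A i k) (∑ k, A j k))⁻¹) := by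
  simp [rowDefect, scaleByMaxRowSum, mul_sub, sum_sub_distrib, ← sum_mul, hi, div_eq_mul_inv]

variable [IsStrictOrderedRing R]

theorem scaleByMaxRowSum_nonneg (hA_nonneg : ∀ i j, 0 ≤ A i j) (i j : n) :
    0 ≤ scaleByMaxRowSum A i j :=
  div_nonneg (hA_nonneg i j) (le_max_of_le_left (sum_nonneg fun k _ => hA_nonneg i k))

theorem sum_scaleByMaxRowSum_le_one (hA_nonneg : ∀ i j, 0 ≤ A i j) {i : n}
    (hi : 0 < ∑ j, A i j) : ∑ j, scaleByMaxRowSum A i j ≤ 1 := by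
  rw [← sub_nonneg]
  change 0 ≤ rowDefect (scaleByMaxRowSum A) i
  rw [rowDefect_scaleByMaxRowSum hi.ne']
  exact sum_nonneg fun j _ => mul_nonneg (hA_nonneg i j) <|
    sub_nonneg.2 <| inv_anti₀ hi (le_max_left _ _)

theorem rowDefect_scaleByMaxRowSum_mul_le {i : n} {μ : R} {w : n → R}
    (hA_nonneg : ∀ j, 0 ≤ A i j) (hi : 0 < ∑ j, A i j) (hμ : ∀ j, 0 < A i j → μ ≤ w j) :
    rowDefect (scaleByMaxRowSum A) i * μ ≤
      ∑ j, A i j * w j * ((∑ k, A i k)⁻¹ - (max (∑ k, A i k) (∑ k, A j k))⁻¹) := by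
  rw [rowDefect_scaleByMaxRowSum hi.ne', sum_mul]
  refine sum_le_sum fun j _ => ?_
  have hAμ : A i j * μ ≤ A i j * w j := by
    rcases (hA_nonneg j).eq_or_lt with h | h
    · simp [← h]
    · exact mul_le_mul_of_nonneg_left (hμ j h) h.le
  rw [mul_right_comm]
  exact mul_le_mul_of_nonneg_right hAμ <| sub_nonneg.2 <| inv_anti₀ hi (le_max_left _ _)

theorem sum_scaleByMaxRowSum_mul_add_rowDefect_mul_le {w : Matrix n n R} {μ : n → R}
    (hA : A.IsSymm) (hA_nonneg : ∀ i j, 0 ≤ A i j) (hA_row : ∀ i, 1 ≤ ∑ j, A i j)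
    (hw : w.IsSymm) (hw_nonneg : ∀ i j, 0 ≤ w i j)
    (hμ : ∀ i j, 0 < A i j → μ i ≤ w i j) :
    ∑ i, (∑ j, scaleByMaxRowSum A i j * w i j + rowDefect (scaleByMaxRowSum A) i * (2 * μ i)) ≤
      ∑ i, ∑ j, A i j * w i j := by
  set s : n → R := fun i => ∑ j, A i j with hs
  have hs_pos (i : n) : 0 < s i := zero_lt_one.trans_le (hA_row i)
  have hswap : ∑ i, ∑ j, A i j * w i j * (s i)⁻¹ = ∑ i, ∑ j, A i j * w i j * (s j)⁻¹ := by
    rw [sum_comm]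
    exact sum_congr rfl fun i _ => sum_congr rfl fun j _ => by rw [hA.apply, hw.apply]
  calc
    _ ≤ ∑ i, (∑ j, A i j * w i j * (max (s i) (s j))⁻¹ +
          2 * ∑ j, A i j * w i j * ((s i)⁻¹ - (max (s i) (s j))⁻¹)) := by
      refine sum_le_sum fun i _ => add_le_add (le_of_eq ?_) ?_
      · simp [scaleByMaxRowSum, div_eq_mul_inv, mul_right_comm, hs]
      · rw [mul_left_comm]
        exact mul_le_mul_of_nonneg_left
          (rowDefect_scaleByMaxRowSum_mul_le (hA_nonneg i) (hs_pos i) (hμ i)) zero_le_two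
    _ = ∑ i, ∑ j, A i j * w i j * ((s i)⁻¹ + (s j)⁻¹ - (max (s i) (s j))⁻¹) := by
      simp only [mul_sub, mul_add, sum_sub_distrib, sum_add_distrib, ← hswap, ← mul_sum]
      ring
    _ = ∑ i, ∑ j, A i j * w i j * (min (s i) (s j))⁻¹ := by
      refine sum_congr rfl fun i _ => sum_congr rfl fun j _ => ?_
      rw [← fn_min_add_fn_max (·⁻¹), add_sub_cancel_right]
    _ ≤ _ := by
      refine sum_le_sum fun i _ => sum_le_sum fun j _ => ?_
      exact mul_le_of_le_one_right (mul_nonneg (hA_nonneg i j) (hw_nonneg i j)) <|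
        inv_le_one_of_one_le₀ <| le_min (hA_row i) (hA_row j)

theorem exists_perm_sum_le_of_one_le_sum_row [DecidableEq n] {w : Matrix n n R} {μ : n → R}
    (hA : A.IsSymm) (hA_nonneg : ∀ i j, 0 ≤ A i j) (hA_diag : ∀ i, A i i = 0)
    (hA_row : ∀ i, 1 ≤ ∑ j, A i j) (hw : w.IsSymm) (hw_nonneg : ∀ i j, 0 ≤ w i j)
    (hμ : ∀ i j, 0 < A i j → μ i ≤ w i j) :
    ∃ π : Equiv.Perm n, (∀ i, π i ≠ i → 0 < A i (π i)) ∧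
      ∑ i, (if π i = i then 2 * μ i else w i (π i)) ≤ ∑ i, ∑ j, A i j * w i j := by
  set B := scaleByMaxRowSum A with hB
  have hB_stoch : B + .diagonal (rowDefect B) ∈ doublyStochastic R n :=
    add_diagonal_rowDefect_mem_doublyStochastic (isSymm_scaleByMaxRowSum hA)
      (scaleByMaxRowSum_nonneg hA_nonneg) fun i =>
        sum_scaleByMaxRowSum_le_one hA_nonneg (zero_lt_one.trans_le (hA_row i))
  obtain ⟨π, hπ_pos, hπ_cost⟩ := exists_perm_sum_le_of_mem_doublyStochastic hB_stoch
    fun i j => if j = i then 2 * μ i else w i j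
  refine ⟨π, fun i hi => (hA_nonneg i (π i)).lt_of_ne' fun hAi => ?_, hπ_cost.trans ?_⟩
  · have hBi := hπ_pos i
    simp [hB, scaleByMaxRowSum, hAi, Matrix.diagonal_apply_ne' _ hi] at hBi
  · refine le_trans (sum_congr rfl fun i _ => ?_).le
      (sum_scaleByMaxRowSum_mul_add_rowDefect_mul_le hA hA_nonneg hA_row hw hw_nonneg hμ)
    have hsplit (j : n) : (B + .diagonal (rowDefect B)) i j *
        (if j = i then 2 * μ i else w i j) =
          B i j * w i j + if j = i then rowDefect B i * (2 * μ i) else 0 := by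
      by_cases hij : j = i
      · subst hij
        simp [hB, scaleByMaxRowSum, hA_diag]
      · simp [hij, Matrix.diagonal_apply_ne' _ hij]
    simp_rw [hsplit]
    simp [sum_add_distrib, hB]

end ScaleByMaxRowSum

section EdgeSums

variable {M : Type*} [AddCommMonoid M]

theorem sum_incidenceFinset_eq_sum_neighborFinset [Fintype V] [DecidableEq V]
    (G : SimpleGraph V) (v : V) (f : Sym2 V → M) :
    ∑ e ∈ G.incidenceFinset v, f e = ∑ u ∈ G.neighborFinset v, f s(v, u) := by
  have himage : G.incidenceFinset v = (G.neighborFinset v).image (s(v, ·)) := by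
    ext e
    rw [SimpleGraph.mem_incidenceFinset, mem_image]
    constructor
    · rintro ⟨he, u, rfl⟩
      exact ⟨u, (G.mem_neighborFinset v u).2 he, rfl⟩
    · rintro ⟨u, hu, rfl⟩
      exact ⟨(G.mem_neighborFinset v u).1 hu, Sym2.mem_mk_left v u⟩
  rw [himage, sum_image fun u _ u' _ h => Sym2.congr_right.1 h]

theorem sum_sum_incidenceFinset [Fintype V] [DecidableEq V] (G : SimpleGraph V)
    (f : Sym2 V → M) :
    ∑ v, ∑ e ∈ G.incidenceFinset v, f e = 2 • ∑ e ∈ G.edgeFinset, f e := by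
  rw [sum_comm' (t' := G.edgeFinset) (s' := Sym2.toFinset), smul_sum]
  · refine sum_congr rfl fun e he => ?_
    rw [sum_const, Sym2.card_toFinset_of_not_isDiag e
      (G.not_isDiag_of_mem_edgeSet (SimpleGraph.mem_edgeFinset.1 he))]
  · simp [SimpleGraph.incidenceFinset_eq_filter, and_comm]

theorem sum_incidenceFinset_eq_sum [Fintype V] [DecidableEq V] {G : SimpleGraph V}
    {f : Sym2 V → M} (hf : ∀ e ∉ G.edgeSet, f e = 0) (v : V) :
    ∑ e ∈ G.incidenceFinset v, f e = ∑ u, f s(v, u) := by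
  rw [sum_incidenceFinset_eq_sum_neighborFinset]
  exact sum_subset (subset_univ _) fun u _ hu => hf _ (by simpa using hu)

end EdgeSums

section EdgeCovers

variable [Fintype V] [DecidableEq V] {G : SimpleGraph V}

theorem isEdgeCover_image {f : V → V} (hf : ∀ v, G.Adj v (f v)) {S : Finset V}
    (hS : ∀ v, v ∈ S ∨ ∃ u ∈ S, f u = v) : IsEdgeCover G (S.image fun v => s(v, f v)) := by
  refine ⟨fun e he => ?_, fun v => ?_⟩
  · obtain ⟨v, -, rfl⟩ := mem_image.1 he
    exact hf v
  · obtain hv | ⟨u, hu, rfl⟩ := hS v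
    · exact ⟨_, mem_image_of_mem _ hv, Sym2.mem_mk_left v (f v)⟩
    · exact ⟨_, mem_image_of_mem _ hu, Sym2.mem_mk_right u (f u)⟩

theorem exists_isEdgeCover_three_mul_sum_le {R : Type*} [CommRing R] [LinearOrder R]
    [IsStrictOrderedRing R] {π : Equiv.Perm V} {f : V → V} (hf : ∀ v, G.Adj v (f v))
    (hπ : ∀ v, π v ≠ v → f v = π v) {ρ : Sym2 V → R} (hρ : ∀ e, 0 ≤ ρ e) :
    ∃ C, IsEdgeCover G C ∧
      3 * ∑ e ∈ C, ρ e ≤ ∑ v, (if π v = v then 3 else 2) * ρ s(v, f v) := by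
  obtain ⟨c, hc⟩ := exists_fin_three_coloring_perm π
  let S (i : Fin 3) : Finset V := {v | π v = v ∨ c v ≠ i}
  have hS (i : Fin 3) (v : V) : v ∈ S i ∨ ∃ u ∈ S i, f u = v := by
    refine or_iff_not_imp_left.2 fun hv => ?_
    obtain ⟨hne, hcv⟩ : π v ≠ v ∧ c v = i := by simpa [S] using hv
    have hne' : π (π.symm v) ≠ π.symm v := by
      simpa [Equiv.eq_symm_apply, eq_comm] using hne
    refine ⟨π.symm v, ?_, by rw [hπ _ hne', π.apply_symm_apply]⟩
    have := hc _ hne'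
    simp_all [S, eq_comm]
  have hcount (v : V) : #{i | v ∈ S i} = if π v = v then 3 else 2 := by
    by_cases hv : π v = v
    · simp [S, hv]
    · simp [S, hv, filter_ne]
  have htotal : ∑ i, ∑ v ∈ S i, ρ s(v, f v) =
      ∑ v, (if π v = v then 3 else 2) * ρ s(v, f v) := by
    rw [sum_comm' (t' := univ) (s' := fun v => ({i | v ∈ S i} : Finset (Fin 3))) (by simp)]
    refine sum_congr rfl fun v _ => ?_
    rw [sum_const, hcount, nsmul_eq_mul]
    push_cast
    rfl
  obtain ⟨i, -, hi⟩ := exists_le_of_sum_le (univ_nonempty (α := Fin 3))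
    (f := fun i => 3 * ∑ v ∈ S i, ρ s(v, f v))
    (g := fun _ => ∑ v, (if π v = v then 3 else 2) * ρ s(v, f v))
    (by simp [← mul_sum, htotal])
  exact ⟨_, isEdgeCover_image hf (hS i), le_trans (mul_le_mul_of_nonneg_left
    (sum_image_le_of_nonneg fun e _ => hρ e) zero_le_three) hi⟩

theorem Γec_subset_Γfec (G : SimpleGraph V) : Γec G ⊆ Γfec G := by
  rintro _ ⟨C, ⟨hCE, hC⟩, rfl⟩
  have hnonneg (e : Sym2 V) : (0 : ℝ) ≤ if e ∈ C then 1 else 0 := by positivity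
  refine ⟨hnonneg, fun e he => if_neg fun h => he (hCE h), fun v => ?_⟩
  obtain ⟨e, heC, hve⟩ := hC v
  calc (1 : ℝ) = if e ∈ C then 1 else 0 := (if_pos heC).symm
    _ ≤ ∑ e ∈ G.incidenceFinset v, if e ∈ C then 1 else 0 :=
      single_le_sum (fun e _ => hnonneg e)
        ((G.mem_incidenceFinset v e).2 ⟨hCE heC, hve⟩)

theorem exists_adj_of_mem_Γfec {γ : Sym2 V → ℝ} (hγ : γ ∈ Γfec G) (v : V) : ∃ u, G.Adj v u := by
  have hne : ∑ u ∈ G.neighborFinset v, γ s(v, u) ≠ 0 := by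
    rw [← sum_incidenceFinset_eq_sum_neighborFinset]
    exact (zero_lt_one.trans_le (hγ.2.2 v)).ne'
  obtain ⟨u, hu, -⟩ := exists_ne_zero_of_sum_ne_zero hne
  exact ⟨u, (G.mem_neighborFinset v u).1 hu⟩

theorem exists_perm_sum_le_of_mem_Γfec {γ ρ : Sym2 V → ℝ} (hγ : γ ∈ Γfec G)
    (hρ : ∀ e, 0 ≤ ρ e) :
    ∃ (π : Equiv.Perm V) (f : V → V), (∀ v, G.Adj v (f v)) ∧ (∀ v, π v ≠ v → f v = π v) ∧
      ∑ v, (if π v = v then 2 else 1) * ρ s(v, f v) ≤ 2 * ∑ e ∈ G.edgeFinset, γ e * ρ e := by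
  have ⟨hγ_nonneg, hγ_edge, hγ_cover⟩ := hγ
  have hγ_adj {u v : V} (h : 0 < γ s(u, v)) : G.Adj u v :=
    not_imp_comm.1 (hγ_edge s(u, v)) h.ne'
  choose m hm_adj hm_min using fun v =>
    Set.exists_min_image (G.neighborSet v) (fun u => ρ s(v, u)) (Set.toFinite _)
      (exists_adj_of_mem_Γfec hγ v)
  obtain ⟨π, hπ_pos, hπ_cost⟩ := exists_perm_sum_le_of_one_le_sum_row
    (A := .of fun u v => γ s(u, v)) (w := .of fun u v => ρ s(u, v)) (μ := fun v => ρ s(v, m v))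
    (.ext fun u v => by simp [Sym2.eq_swap]) (fun u v => hγ_nonneg s(u, v))
    (fun v => hγ_edge _ (by simp))
    (fun v => (hγ_cover v).trans_eq (sum_incidenceFinset_eq_sum hγ_edge v))
    (.ext fun u v => by simp [Sym2.eq_swap]) (fun u v => hρ s(u, v))
    (fun u v h => hm_min u v (hγ_adj h))
  refine ⟨π, fun v => if π v = v then m v else π v, fun v => ?_, fun v hv => if_neg hv, ?_⟩
  · dsimp only
    split_ifs with hv
    exacts [hm_adj v, hγ_adj (hπ_pos v hv)]
  · have hsupp : ∀ e ∉ G.edgeSet, γ e * ρ e = 0 := fun e he => by simp [hγ_edge e he]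
    calc
      _ = ∑ v, if π v = v then 2 * ρ s(v, m v) else ρ s(v, π v) :=
        sum_congr rfl fun v _ => by by_cases hv : π v = v <;> simp [hv]
      _ ≤ ∑ u, ∑ v, γ s(u, v) * ρ s(u, v) := hπ_cost
      _ = 2 * ∑ e ∈ G.edgeFinset, γ e * ρ e := by
        simp_rw [← sum_incidenceFinset_eq_sum hsupp, sum_sum_incidenceFinset, two_nsmul, two_mul]

theorem exists_isEdgeCover_sum_le_of_mem_Γfec {γ ρ : Sym2 V → ℝ} (hγ : γ ∈ Γfec G)
    (hρ : ∀ e, 0 ≤ ρ e) :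
    ∃ C, IsEdgeCover G C ∧ ∑ e ∈ C, ρ e ≤ 4 / 3 * ∑ e ∈ G.edgeFinset, γ e * ρ e := by
  obtain ⟨π, f, hf, hπ, hπ_cost⟩ := exists_perm_sum_le_of_mem_Γfec hγ hρ
  obtain ⟨C, hC, hC_sum⟩ := exists_isEdgeCover_three_mul_sum_le hf hπ hρ
  refine ⟨C, hC, ?_⟩
  have hcost : 3 * ∑ e ∈ C, ρ e ≤ 4 * ∑ e ∈ G.edgeFinset, γ e * ρ e := calc
    _ ≤ ∑ v, (if π v = v then 3 else 2) * ρ s(v, f v) := hC_sum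
    _ ≤ 2 * ∑ v, (if π v = v then 2 else 1) * ρ s(v, f v) := by
      rw [mul_sum]
      refine sum_le_sum fun v _ => ?_
      split_ifs <;> linarith [hρ s(v, f v)]
    _ ≤ 2 * (2 * ∑ e ∈ G.edgeFinset, γ e * ρ e) := by gcongr
    _ = 4 * ∑ e ∈ G.edgeFinset, γ e * ρ e := by ring
  linarith

end EdgeCovers

section Modulus

variable [Fintype V] [DecidableEq V] {G : SimpleGraph V} {Γ Γ' : Set (Sym2 V → ℝ)}
  {σ : Sym2 V → ℝ}

theorem adm_anti (h : Γ ⊆ Γ') : Adm G Γ' ⊆ Adm G Γ :=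
  fun _ hρ => ⟨hρ.1, hρ.2.1, fun γ hγ => hρ.2.2 γ (h hγ)⟩

theorem nonempty_adm_Γfec [Nonempty V] (G : SimpleGraph V) : (Adm G (Γfec G)).Nonempty := by
  refine ⟨G.edgeSet.indicator 1, fun e => Set.indicator_nonneg (fun _ _ => zero_le_one) e,
    fun e he => Set.indicator_of_notMem he 1, fun γ hγ => ?_⟩
  obtain ⟨v⟩ := ‹Nonempty V›
  calc 1 ≤ ∑ e ∈ G.incidenceFinset v, γ e := hγ.2.2 v
    _ ≤ ∑ e ∈ G.edgeFinset, γ e :=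
      sum_le_sum_of_subset_of_nonneg (G.incidenceFinset_subset v) fun e _ _ => hγ.1 e
    _ = ∑ e ∈ G.edgeFinset, γ e * G.edgeSet.indicator 1 e :=
      sum_congr rfl fun e he => by simp [SimpleGraph.mem_edgeFinset.1 he]

theorem energyInf_smul (hE : G.edgeFinset.Nonempty) {c : ℝ} (hc : 0 ≤ c) (ρ : Sym2 V → ℝ) :
    energyInf σ G hE (c • ρ) = c * energyInf σ G hE ρ := by
  simp [energyInf, mul₀_sup' hc, mul_left_comm]

theorem bddBelow_energyInf_image_adm (hσ : ∀ e, 0 ≤ σ e) (hE : G.edgeFinset.Nonempty) :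
    BddBelow (energyInf σ G hE '' Adm G Γ) := by
  refine ⟨0, ?_⟩
  rintro _ ⟨ρ, hρ, rfl⟩
  have ⟨e, he⟩ := hE
  exact (mul_nonneg (hσ e) (hρ.1 e)).trans (le_sup' (fun e => σ e * ρ e) he)

theorem modulusInf_mono (hσ : ∀ e, 0 ≤ σ e) (hE : G.edgeFinset.Nonempty)
    (hΓ' : (Adm G Γ').Nonempty) (h : Γ ⊆ Γ') : ModulusInf σ G hE Γ ≤ ModulusInf σ G hE Γ' :=
  csInf_le_csInf (bddBelow_energyInf_image_adm hσ hE) (hΓ'.image _) (Set.image_mono (adm_anti h))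

theorem modulusInf_le_mul_of_smul_mem_adm (hσ : ∀ e, 0 ≤ σ e) (hE : G.edgeFinset.Nonempty)
    (hΓ : (Adm G Γ).Nonempty) {c : ℝ} (hc : 0 < c) (h : ∀ ρ ∈ Adm G Γ, c • ρ ∈ Adm G Γ') :
    ModulusInf σ G hE Γ' ≤ c * ModulusInf σ G hE Γ := by
  rw [← div_le_iff₀' hc]
  refine le_csInf (hΓ.image _) ?_
  rintro _ ⟨ρ, hρ, rfl⟩
  rw [div_le_iff₀' hc, ← energyInf_smul hE hc.le]
  exact csInf_le (bddBelow_energyInf_image_adm hσ hE) (Set.mem_image_of_mem _ (h ρ hρ))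

theorem four_thirds_smul_mem_adm_Γfec {ρ : Sym2 V → ℝ} (hρ : ρ ∈ Adm G (Γec G)) :
    (4 / 3 : ℝ) • ρ ∈ Adm G (Γfec G) := by
  obtain ⟨hρ_nonneg, hρ_edge, hρ_ec⟩ := hρ
  refine ⟨fun e => mul_nonneg (by norm_num) (hρ_nonneg e), fun e he => by simp [hρ_edge e he],
    fun γ hγ => ?_⟩
  obtain ⟨C, hC, hC_sum⟩ := exists_isEdgeCover_sum_le_of_mem_Γfec hγ hρ_nonneg
  have hCE : C ⊆ G.edgeFinset := fun e he => SimpleGraph.mem_edgeFinset.2 (hC.1 he)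
  calc 1 ≤ ∑ e ∈ G.edgeFinset, (if e ∈ C then 1 else 0) * ρ e := hρ_ec _ ⟨C, hC, rfl⟩
    _ = ∑ e ∈ C, ρ e := by simp [inter_eq_right.2 hCE]
    _ ≤ 4 / 3 * ∑ e ∈ G.edgeFinset, γ e * ρ e := hC_sum
    _ = ∑ e ∈ G.edgeFinset, γ e * ((4 / 3 : ℝ) • ρ) e := by simp [mul_sum, mul_left_comm]

end Modulus

/-- `(3/4) Mod_{∞,σ}(Γ_fec) ≤ Mod_{∞,σ}(Γ_ec) ≤ Mod_{∞,σ}(Γ_fec)`. -/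
theorem modInf_ec_fec_bounds [Fintype V] [DecidableEq V] (G : SimpleGraph V)
    (hiso : ∀ v : V, ∃ u, G.Adj v u) (hE : G.edgeFinset.Nonempty)
    (σ : Sym2 V → ℝ) (hσ : ∀ e, 0 < σ e) :
    (3 / 4 : ℝ) * ModulusInf σ G hE (Γfec G) ≤ ModulusInf σ G hE (Γec G) ∧
    ModulusInf σ G hE (Γec G) ≤ ModulusInf σ G hE (Γfec G) := by
  have hσ_nonneg (e : Sym2 V) : 0 ≤ σ e := (hσ e).le
  have : Nonempty V := ⟨hE.choose.out.1⟩
  have hfec : (Adm G (Γfec G)).Nonempty := nonempty_adm_Γfec G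
  have hec : (Adm G (Γec G)).Nonempty := hfec.mono (adm_anti (Γec_subset_Γfec G))
  have hrounding : ModulusInf σ G hE (Γfec G) ≤ 4 / 3 * ModulusInf σ G hE (Γec G) :=
    modulusInf_le_mul_of_smul_mem_adm hσ_nonneg hE hec (by norm_num)
      fun _ => four_thirds_smul_mem_adm_Γfec
  exact ⟨by linarith, modulusInf_mono hσ_nonneg hE hfec (Γec_subset_Γfec G)⟩
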